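/- If the random projection vector v ∈ ℝ^D satisfies E_{p_v}[v v^⊤] = I_D and the relevant expectations are finite, then for every θ the sliced score matching objective equals the exact score matching objective: E_{p_v} E_{p_d}[ v^⊤ ∇_x s_m(x;θ) v + ½ (v^⊤ s_m(x;θ))² ] = E_{p_d}[ tr(∇_x s_m(x;θ)) + ½ ‖s_m(x;θ)‖² ]. In particular this holds when p_v is the multivariate standard normal N(0, I_D) or the multivariate Rademacher distribution. -/

import Mathlib

open MeasureTheory

noncomputable section

/-- `∂ᵢ log p_m(x;θ)`, the `i`-th partial derivative in `x` of the log-density. -/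
def dLx {D : ℕ} {Θ : Type*} (pm : Θ → (Fin D → ℝ) → ℝ)
    (θ : Θ) (x : Fin D → ℝ) (i : Fin D) : ℝ :=
  fderiv ℝ (fun y => Real.log (pm θ y)) x (Pi.single i 1)

/-- `∂ᵢ∂ⱼ log p_m(x;θ)`, a second partial derivative in `x` of the log-density. -/
def d2Lx {D : ℕ} {Θ : Type*} (pm : Θ → (Fin D → ℝ) → ℝ)
    (θ : Θ) (x : Fin D → ℝ) (i j : Fin D) : ℝ :=
  fderiv ℝ (fun y => dLx pm θ y j) x (Pi.single i 1)

/-! Both terms of the sliced objective are quadratic forms in `v`, the second one because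
`(v ⬝ᵥ s) ^ 2 = v ⬝ᵥ (s sᵀ) *ᵥ v`. For fixed `x` the expectation of a quadratic form under an
isotropic law is the trace of its matrix, so the theorem amounts to exchanging the integrals over
`v` and `x`. This is Fubini's theorem: the Hessian term is integrable by assumption, and
Cauchy–Schwarz dominates the score term by `‖v‖² ‖s x‖²`. -/

open ProbabilityTheory Matrix

section QuadraticForm

variable {ι R : Type*} [Fintype ι] [CommSemiring R]

theorem dotProduct_mulVec_self_eq_sum (A : Matrix ι ι R) (v : ι → R) :
    v ⬝ᵥ A *ᵥ v = ∑ i, ∑ j, v i * v j * A i j := by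
  simp only [dotProduct, mulVec, Finset.mul_sum]
  exact Finset.sum_congr rfl fun i _ => Finset.sum_congr rfl fun j _ => by ring

theorem dotProduct_vecMulVec_self_mulVec (s v : ι → R) :
    v ⬝ᵥ vecMulVec s s *ᵥ v = (v ⬝ᵥ s) ^ 2 := by
  simp [vecMulVec_mulVec, dotProduct_comm s v, sq]

end QuadraticForm

section SecondMoment

variable {ι : Type*} [Fintype ι] {μ : Measure (ι → ℝ)}

theorem memLp_eval_two_of_integrable_sum_sq (h : Integrable (fun v => ∑ i, v i ^ 2) μ) (i : ι) :
    MemLp (fun v : ι → ℝ => v i) 2 μ := by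
  have h_meas : Measurable fun v : ι → ℝ => v i := measurable_pi_apply i
  refine (memLp_two_iff_integrable_sq h_meas.aestronglyMeasurable).2
    (h.mono' (h_meas.pow_const 2).aestronglyMeasurable (ae_of_all _ fun v => ?_))
  rw [Real.norm_of_nonneg (sq_nonneg _)]
  exact Finset.single_le_sum (fun k _ => sq_nonneg (v k)) (Finset.mem_univ i)

theorem integrable_prod_mul_sq_dotProduct {X : Type*} [MeasurableSpace X] {ν : Measure X}
    {w : X → ℝ} {s : X → ι → ℝ} (hμ : Integrable (fun v => ∑ i, v i ^ 2) μ)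
    (hw : AEStronglyMeasurable w ν) (hs : AEStronglyMeasurable s ν)
    (hws : Integrable (fun x => w x * ∑ i, s x i ^ 2) ν) :
    Integrable (fun z : (ι → ℝ) × X => w z.2 * (z.1 ⬝ᵥ s z.2) ^ 2) (μ.prod ν) := by
  have h_meas : AEStronglyMeasurable (fun z : (ι → ℝ) × X => z.1 ⬝ᵥ s z.2) (μ.prod ν) := by
    have h_cont : Continuous fun p : (ι → ℝ) × (ι → ℝ) => p.1 ⬝ᵥ p.2 := by fun_prop
    exact h_cont.comp_aestronglyMeasurable
      (measurable_fst.aestronglyMeasurable.prodMk hs.comp_snd)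
  refine (hμ.mul_prod hws.norm).mono' (hw.comp_snd.mul (h_meas.pow 2)) (ae_of_all _ fun z => ?_)
  have h_cauchy_schwarz : (z.1 ⬝ᵥ s z.2) ^ 2 ≤ (∑ i, z.1 i ^ 2) * ∑ i, s z.2 i ^ 2 :=
    Finset.sum_mul_sq_le_sq_mul_sq Finset.univ z.1 (s z.2)
  have h_nonneg : 0 ≤ ∑ i, s z.2 i ^ 2 := Finset.sum_nonneg fun i _ => sq_nonneg _
  calc ‖w z.2 * (z.1 ⬝ᵥ s z.2) ^ 2‖
      = ‖w z.2‖ * (z.1 ⬝ᵥ s z.2) ^ 2 := by rw [norm_mul, Real.norm_of_nonneg (sq_nonneg _)]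
    _ ≤ ‖w z.2‖ * ((∑ i, z.1 i ^ 2) * ∑ i, s z.2 i ^ 2) := by gcongr
    _ = (∑ i, z.1 i ^ 2) * ‖w z.2 * ∑ i, s z.2 i ^ 2‖ := by
        rw [norm_mul, Real.norm_of_nonneg h_nonneg]; ring

end SecondMoment

/-- A measure on `ι → ℝ` is isotropic if its coordinates are square-integrable and its
second-moment matrix `E[v vᵀ]` is the identity; centering is not part of the notion.
Square-integrability is a separate field so that the Bochner integrals are genuine moments. -/
structure IsIsotropic {ι : Type*} [DecidableEq ι] (μ : Measure (ι → ℝ)) : Prop where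
  memLp_eval : ∀ i, MemLp (fun v : ι → ℝ => v i) 2 μ
  integral_eval_mul_eval : ∀ i j, ∫ v, v i * v j ∂μ = if i = j then 1 else 0

namespace IsIsotropic

variable {ι : Type*} [DecidableEq ι] {μ : Measure (ι → ℝ)}

theorem integrable_eval_mul_eval (hμ : IsIsotropic μ) (i j : ι) :
    Integrable (fun v => v i * v j) μ :=
  (hμ.memLp_eval i).integrable_mul (hμ.memLp_eval j)

variable [Fintype ι]

theorem integrable_sum_sq (hμ : IsIsotropic μ) : Integrable (fun v => ∑ i, v i ^ 2) μ :=
  integrable_finsetSum _ fun i _ => (hμ.memLp_eval i).integrable_sq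

theorem integral_dotProduct_mulVec (hμ : IsIsotropic μ) (A : Matrix ι ι ℝ) :
    ∫ v, v ⬝ᵥ A *ᵥ v ∂μ = A.trace := by
  have h_int (i j : ι) : Integrable (fun v => v i * v j * A i j) μ :=
    (hμ.integrable_eval_mul_eval i j).mul_const _
  calc ∫ v, v ⬝ᵥ A *ᵥ v ∂μ
      = ∫ v, ∑ i, ∑ j, v i * v j * A i j ∂μ := by simp only [dotProduct_mulVec_self_eq_sum]
    _ = ∑ i, ∑ j, (∫ v, v i * v j ∂μ) * A i j := by
        rw [integral_finsetSum _ fun i _ => integrable_finsetSum _ fun j _ => h_int i j]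
        simp only [integral_finsetSum _ fun j _ => h_int _ j, integral_mul_const]
    _ = A.trace := by simp [hμ.integral_eval_mul_eval, trace]

theorem integral_integral_dotProduct_mulVec {X : Type*} [MeasurableSpace X] {ν : Measure X}
    [SFinite μ] [SFinite ν] (hμ : IsIsotropic μ) {A : X → Matrix ι ι ℝ}
    (hA : Integrable (fun z : (ι → ℝ) × X => z.1 ⬝ᵥ A z.2 *ᵥ z.1) (μ.prod ν)) :
    ∫ v, ∫ x, v ⬝ᵥ A x *ᵥ v ∂ν ∂μ = ∫ x, (A x).trace ∂ν := by
  rw [integral_integral_swap hA]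
  simp only [hμ.integral_dotProduct_mulVec]

end IsIsotropic

section Product

variable {ι : Type*} [Fintype ι] [DecidableEq ι]

theorem isIsotropic_pi {ν : ι → Measure ℝ} [∀ i, IsProbabilityMeasure (ν i)]
    (h_memLp : ∀ i, MemLp id 2 (ν i)) (h_mean : ∀ i, ∫ x, x ∂ν i = 0)
    (h_var : ∀ i, Var[id; ν i] = 1) : IsIsotropic (Measure.pi ν) where
  memLp_eval i := (h_memLp i).comp_measurePreserving (measurePreserving_eval ν i)
  integral_eval_mul_eval i j := by
    have h_marginal (k : ι) {f : ℝ → ℝ} (hf : Measurable f) :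
        ∫ v, f (v k) ∂Measure.pi ν = ∫ x, f x ∂ν k :=
      integral_comp_eval hf.aestronglyMeasurable
    split_ifs with hij
    · subst hij
      calc ∫ v, v i * v i ∂Measure.pi ν
          = ∫ x, x ^ 2 ∂ν i := by
            simp only [← sq]
            exact h_marginal i (measurable_id.pow_const 2)
        _ = Var[id; ν i] := (variance_of_integral_eq_zero aemeasurable_id (h_mean i)).symm
        _ = 1 := h_var i
    · have h_indep : IndepFun (fun v : ι → ℝ => v i) (fun v => v j) (Measure.pi ν) :=
        (iIndepFun_pi (X := fun _ (x : ℝ) => x) fun _ => aemeasurable_id).indepFun hij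
      calc ∫ v, v i * v j ∂Measure.pi ν
          = (∫ v, v i ∂Measure.pi ν) * ∫ v, v j ∂Measure.pi ν :=
            h_indep.integral_fun_mul_eq_mul_integral
              (measurable_pi_apply i).aestronglyMeasurable
              (measurable_pi_apply j).aestronglyMeasurable
        _ = (∫ x, x ∂ν i) * ∫ v, v j ∂Measure.pi ν :=
            congrArg (· * _) (h_marginal i measurable_id)
        _ = 0 := by rw [h_mean, zero_mul]

theorem isIsotropic_pi_gaussianReal :
    IsIsotropic (Measure.pi fun _ : ι => gaussianReal 0 1) :=
  isIsotropic_pi (fun _ => memLp_id_gaussianReal 2) (fun _ => integral_id_gaussianReal)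
    (fun _ => variance_id_gaussianReal)

end Product

section Rademacher

/-- The Rademacher law on `ℝ`, giving mass `1/2` to each of `1` and `-1`: the law of a random sign
encoded by a fair coin. -/
def rademacher : Measure ℝ :=
  (PMF.uniformOfFintype Bool).toMeasure.map fun b => if b then 1 else -1

instance : IsProbabilityMeasure rademacher :=
  Measure.isProbabilityMeasure_map (measurable_of_finite _).aemeasurable

theorem integral_rademacher {f : ℝ → ℝ} (hf : AEStronglyMeasurable f rademacher) :
    ∫ x, f x ∂rademacher = (f 1 + f (-1)) / 2 := by
  rw [rademacher, integral_map (measurable_of_finite _).aemeasurable hf, PMF.integral_eq_sum,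
    Fintype.sum_bool]
  simp only [PMF.uniformOfFintype_apply, Fintype.card_bool, Nat.cast_ofNat, ENNReal.toReal_inv,
    ENNReal.toReal_ofNat, smul_eq_mul, Bool.false_eq_true, if_true, if_false]
  ring

theorem integral_id_rademacher : ∫ x, x ∂rademacher = 0 := by
  simp [integral_rademacher (f := fun x => x) aestronglyMeasurable_id]

theorem variance_id_rademacher : Var[id; rademacher] = 1 := by
  rw [variance_of_integral_eq_zero aemeasurable_id integral_id_rademacher,
    integral_rademacher (by fun_prop)]
  norm_num

theorem memLp_id_rademacher (p : ENNReal) : MemLp id p rademacher := by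
  rw [rademacher, memLp_map_measure_iff aestronglyMeasurable_id
    (measurable_of_finite _).aemeasurable]
  exact .of_discrete

variable {ι : Type*} [Fintype ι] [DecidableEq ι]

theorem toMeasure_uniformOfFintype_pi (α : ι → Type*) [∀ i, Fintype (α i)]
    [∀ i, Nonempty (α i)] [∀ i, MeasurableSpace (α i)] [∀ i, MeasurableSingletonClass (α i)] :
    (PMF.uniformOfFintype (∀ i, α i)).toMeasure =
      Measure.pi fun i => (PMF.uniformOfFintype (α i)).toMeasure := by
  refine Measure.ext_of_singleton fun f => ?_
  simp only [Measure.pi_singleton, PMF.toMeasure_apply_singleton _ _ (measurableSet_singleton _),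
    PMF.uniformOfFintype_apply, Fintype.card_pi, Nat.cast_prod]
  exact ENNReal.prod_inv_distrib fun _ _ _ _ _ => .inr (ENNReal.natCast_ne_top _)

theorem map_uniformOfFintype_eq_pi_rademacher :
    (PMF.uniformOfFintype (ι → Bool)).toMeasure.map
        (fun s : ι → Bool => fun i => if s i then (1 : ℝ) else -1) =
      Measure.pi fun _ => rademacher := by
  let sign (b : Bool) : ℝ := if b then 1 else -1
  have : IsProbabilityMeasure ((PMF.uniformOfFintype Bool).toMeasure.map sign) :=
    inferInstanceAs (IsProbabilityMeasure rademacher)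
  rw [toMeasure_uniformOfFintype_pi]
  exact Measure.pi_map_pi (f := fun _ : ι => sign) fun _ => (measurable_of_finite _).aemeasurable

theorem isIsotropic_map_uniformOfFintype_bool :
    IsIsotropic ((PMF.uniformOfFintype (ι → Bool)).toMeasure.map
      fun s : ι → Bool => fun i => if s i then (1 : ℝ) else -1) := by
  rw [map_uniformOfFintype_eq_pi_rademacher]
  exact isIsotropic_pi (fun _ => memLp_id_rademacher 2) (fun _ => integral_id_rademacher)
    (fun _ => variance_id_rademacher)

end Rademacher

theorem sliced_equals_exact_score_matching_of_isotropic_general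
    {ι X : Type*} [Fintype ι] [DecidableEq ι] [MeasurableSpace X]
    {μ : Measure (ι → ℝ)} {ν : Measure X} [SFinite μ] [SFinite ν] (hμ : IsIsotropic μ)
    {w : X → ℝ} {s : X → ι → ℝ} {H : X → Matrix ι ι ℝ}
    (hw : AEStronglyMeasurable w ν) (hs : AEStronglyMeasurable s ν)
    (hs_int : Integrable (fun x => w x * ∑ i, s x i ^ 2) ν)
    (hH_int : Integrable (fun z : (ι → ℝ) × X =>
      w z.2 * ∑ i, ∑ j, z.1 i * z.1 j * H z.2 i j) (μ.prod ν)) :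
    ∫ v, ∫ x, w x * ((∑ i, ∑ j, v i * v j * H x i j) + 1 / 2 * (∑ i, v i * s x i) ^ 2) ∂ν ∂μ =
      ∫ x, w x * ((∑ i, H x i i) + 1 / 2 * ∑ i, s x i ^ 2) ∂ν := by
  let A (x : X) : Matrix ι ι ℝ := w x • (H x + (1 / 2 : ℝ) • vecMulVec (s x) (s x))
  have h_quadratic (v : ι → ℝ) (x : X) : v ⬝ᵥ A x *ᵥ v =
      w x * ((∑ i, ∑ j, v i * v j * H x i j) + 1 / 2 * (v ⬝ᵥ s x) ^ 2) := by
    simp only [A, smul_mulVec, add_mulVec, dotProduct_smul, dotProduct_add, smul_eq_mul,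
      dotProduct_vecMulVec_self_mulVec, ← dotProduct_mulVec_self_eq_sum]
  have h_trace (x : X) : (A x).trace = w x * ((H x).trace + 1 / 2 * ∑ i, s x i ^ 2) := by
    simp only [A, trace_smul, trace_add, trace_vecMulVec, smul_eq_mul, dotProduct, sq]
  have h_int : Integrable (fun z : (ι → ℝ) × X => z.1 ⬝ᵥ A z.2 *ᵥ z.1) (μ.prod ν) := by
    have h_score := integrable_prod_mul_sq_dotProduct hμ.integrable_sum_sq hw hs hs_int
    refine (hH_int.add (h_score.const_mul (1 / 2))).congr (ae_of_all _ fun z => ?_)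
    simp only [h_quadratic, Pi.add_apply]
    ring
  have h_swap := hμ.integral_integral_dotProduct_mulVec h_int
  simp only [h_quadratic, h_trace] at h_swap
  exact h_swap

theorem measurable_dLx {D : ℕ} {Θ : Type*} (pm : Θ → (Fin D → ℝ) → ℝ) (θ : Θ) :
    Measurable (dLx pm θ) :=
  measurable_pi_lambda _ fun _ => measurable_fderiv_apply_const ℝ _ _

/-- **Hutchinson's trick for score matching.** If `E_{p_v}[v vᵀ] = I_D` and the relevant
expectations are finite, the sliced score matching objective equals the exact score
matching objective; in particular the moment condition holds for the multivariate
standard normal `N(0, I_D)` and the multivariate Rademacher distribution. -/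
theorem sliced_equals_exact_score_matching_of_isotropic
    (D : ℕ) (hD : 1 ≤ D) (Θ : Type*)
    (pd : (Fin D → ℝ) → ℝ) (pm : Θ → (Fin D → ℝ) → ℝ)
    (μv : Measure (Fin D → ℝ)) [IsProbabilityMeasure μv]
    -- data density: positive, differentiable, integrates to one
    (hpd_pos : ∀ x, 0 < pd x) (hpd_diff : Differentiable ℝ pd)
    (hpd_prob : ∫ x, pd x = 1)
    -- model densities: positive, twice continuously differentiable
    (hpm_pos : ∀ θ x, 0 < pm θ x) (hpm_smooth : ∀ θ, ContDiff ℝ 2 (pm θ))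
    -- second moment of projection vectors: E[‖v‖²] < ∞
    (hv2 : Integrable (fun v => ∑ i, (v i) ^ 2) μv)
    -- isotropy: E[v vᵀ] = I_D
    (hvvt : ∀ i j, (∫ v, v i * v j ∂μv) = if i = j then (1 : ℝ) else 0)
    -- the relevant expectations are finite
    (hs_int : ∀ θ, Integrable (fun x => pd x * ∑ i, (dLx pm θ x i) ^ 2))
    (hH_int : ∀ θ, Integrable (fun z : (Fin D → ℝ) × (Fin D → ℝ) =>
      pd z.2 * (∑ i, ∑ j, z.1 i * z.1 j * d2Lx pm θ z.2 i j)) (μv.prod volume)) :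
    -- the sliced objective equals the exact score matching objective
    (∀ θ : Θ,
      (∫ v, (∫ x, pd x * ((∑ i, ∑ j, v i * v j * d2Lx pm θ x i j)
          + (1/2) * (∑ i, v i * dLx pm θ x i) ^ 2)) ∂μv)
        = ∫ x, pd x * ((∑ i, d2Lx pm θ x i i) + (1/2) * ∑ i, (dLx pm θ x i) ^ 2))
    -- in particular, the standard normal satisfies E[v vᵀ] = I_D
    ∧ (∀ i j : Fin D,
        (∫ v : Fin D → ℝ, v i * v j
            ∂(Measure.pi fun _ : Fin D => ProbabilityTheory.gaussianReal 0 1))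
          = if i = j then (1 : ℝ) else 0)
    -- and so does the multivariate Rademacher distribution (uniform on {±1}^D)
    ∧ (∀ i j : Fin D,
        (∫ v : Fin D → ℝ, v i * v j
            ∂(Measure.map (fun s : Fin D → Bool => fun i => if s i then (1 : ℝ) else -1)
              (PMF.uniformOfFintype (Fin D → Bool)).toMeasure))
          = if i = j then (1 : ℝ) else 0) := by
  have hμv : IsIsotropic μv := ⟨memLp_eval_two_of_integrable_sum_sq hv2, hvvt⟩
  exact ⟨fun θ => sliced_equals_exact_score_matching_of_isotropic_general hμv
      hpd_diff.continuous.aestronglyMeasurable (measurable_dLx pm θ).aestronglyMeasurable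
      (hs_int θ) (hH_int θ),
    isIsotropic_pi_gaussianReal.integral_eval_mul_eval,
    isIsotropic_map_uniformOfFintype_bool.integral_eval_mul_eval⟩
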